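/- Let s_n = |SEP(n)|. For every real t with |t| < 3 − 2√2, the series ∑_{n=1}^∞ s_n t^n converges and ∑_{n=1}^∞ s_n t^n = (1/2)(1 − t − √(t² − 6t + 1)). -/

import Mathlib

open Finset Filter Real
open scoped Classical

/-- `σ` contains the pattern `τ` (a permutation of `Fin k` given as a function). -/
def ContainsPattern {n k : ℕ} (σ : Equiv.Perm (Fin n)) (τ : Fin k → Fin k) : Prop :=
  ∃ f : Fin k → Fin n, StrictMono f ∧ ∀ a b : Fin k, τ a < τ b ↔ σ (f a) < σ (f b)

/-- A permutation is separable iff it avoids the patterns 2413 and 3142. -/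
def Separable {n : ℕ} (σ : Equiv.Perm (Fin n)) : Prop :=
  ¬ ContainsPattern σ (![1, 3, 0, 2] : Fin 4 → Fin 4) ∧
  ¬ ContainsPattern σ (![2, 0, 3, 1] : Fin 4 → Fin 4)

/-- The set of separable permutations of `[n]`. -/
noncomputable def SEP (n : ℕ) : Finset (Equiv.Perm (Fin n)) :=
  Finset.univ.filter fun σ => Separable σ

/-- `IsAltSeq σ s l` : `l` is a strictly increasing list of indices along which the values of `σ`
alternate, starting with an ascent if `s = true` and starting with a descent if `s = false`. -/
def IsAltSeq {n : ℕ} (σ : Equiv.Perm (Fin n)) (s : Bool) (l : List (Fin n)) : Prop :=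
  l.Chain' (· < ·) ∧
  ∀ j : ℕ, ∀ hj : j + 1 < l.length,
    if decide (j % 2 = 0) = s then
      σ (l.get ⟨j, Nat.lt_of_succ_lt hj⟩) < σ (l.get ⟨j + 1, hj⟩)
    else
      σ (l.get ⟨j + 1, hj⟩) < σ (l.get ⟨j, Nat.lt_of_succ_lt hj⟩)

/-- The length of the longest alternating subsequence of `σ` of type `(s, e)`, where
`true` stands for ascent and `false` for descent.  An alternating subsequence starting with
an ascent ends with a descent iff its length is odd (and similarly in the other cases), so the
type is encoded by the parity constraint; a singleton counts as a subsequence of types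
`(+,-)` and `(-,+)` but not of types `(+,+)` and `(-,-)`. -/
noncomputable def altTypeLen {n : ℕ} (σ : Equiv.Perm (Fin n)) (s e : Bool) : ℕ :=
  sSup {k | ∃ l : List (Fin n), IsAltSeq σ s l ∧ l.length = k ∧
    k % 2 = (if s = e then 0 else 1)}

/-- The length `Aₙ(σ)` of the longest alternating subsequence of `σ`. -/
noncomputable def altLen {n : ℕ} (σ : Equiv.Perm (Fin n)) : ℕ :=
  sSup {k | ∃ l : List (Fin n), (IsAltSeq σ true l ∨ IsAltSeq σ false l) ∧
    l.length = k ∧ 1 ≤ k}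

/-- Expectation with respect to the uniform probability measure on `SEP n`. -/
noncomputable def sepExp (n : ℕ) (f : Equiv.Perm (Fin n) → ℝ) : ℝ :=
  (∑ σ ∈ SEP n, f σ) / (SEP n).card

/-- Variance with respect to the uniform probability measure on `SEP n`. -/
noncomputable def sepVar (n : ℕ) (f : Equiv.Perm (Fin n) → ℝ) : ℝ :=
  sepExp n (fun σ => (f σ - sepExp n f) ^ 2)

/-- `B₁^{+,n}(σ)`: the length of the first indecomposable block (0-indexed positions). -/
noncomputable def Bplus {n : ℕ} (σ : Equiv.Perm (Fin n)) : ℕ :=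
  sInf {j | 1 ≤ j ∧ ∀ i : Fin n, (i : ℕ) < j → (σ i : ℕ) < j}

/-- `B₁^{-,n}(σ)`: the length of the first skew indecomposable block (0-indexed positions). -/
noncomputable def Bminus {n : ℕ} (σ : Equiv.Perm (Fin n)) : ℕ :=
  sInf {j | 1 ≤ j ∧ ∀ i : Fin n, (i : ℕ) < j → n - j ≤ (σ i : ℕ)}

/-- Expectation over indecomposable separable permutations of `[n]`, i.e. the conditional
expectation under the uniform measure on `SEP n` given `{B₁^{+,n} = n}`. -/
noncomputable def indecExp (n : ℕ) (f : Equiv.Perm (Fin n) → ℝ) : ℝ :=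
  (∑ σ ∈ (SEP n).filter (fun σ => Bplus σ = n), f σ) /
    ((SEP n).filter (fun σ => Bplus σ = n)).card

section Combinatorics

variable {n k m : ℕ}

lemma containsPattern_2413_iff (σ : Equiv.Perm (Fin n)) :
    ContainsPattern σ (![1, 3, 0, 2] : Fin 4 → Fin 4) ↔
      ∃ a b c d, a < b ∧ b < c ∧ c < d ∧ σ c < σ a ∧ σ a < σ d ∧ σ d < σ b := by
  constructor
  · rintro ⟨f, hf, h⟩
    exact ⟨f 0, f 1, f 2, f 3, hf (by decide), hf (by decide), hf (by decide),
      (h 2 0).1 (by decide), (h 0 3).1 (by decide), (h 3 1).1 (by decide)⟩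
  · rintro ⟨a, b, c, d, hab, hbc, hcd, h₁, h₂, h₃⟩
    refine ⟨![a, b, c, d], Fin.strictMono_iff_lt_succ.2 fun i => ?_, fun i j => ?_⟩
    · fin_cases i <;> simpa
    · fin_cases i <;> fin_cases j <;> simp <;> order

lemma containsPattern_3142_iff (σ : Equiv.Perm (Fin n)) :
    ContainsPattern σ (![2, 0, 3, 1] : Fin 4 → Fin 4) ↔
      ∃ a b c d, a < b ∧ b < c ∧ c < d ∧ σ b < σ d ∧ σ d < σ a ∧ σ a < σ c := by
  constructor
  · rintro ⟨f, hf, h⟩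
    exact ⟨f 0, f 1, f 2, f 3, hf (by decide), hf (by decide), hf (by decide),
      (h 1 3).1 (by decide), (h 3 0).1 (by decide), (h 0 2).1 (by decide)⟩
  · rintro ⟨a, b, c, d, hab, hbc, hcd, h₁, h₂, h₃⟩
    refine ⟨![a, b, c, d], Fin.strictMono_iff_lt_succ.2 fun i => ?_, fun i j => ?_⟩
    · fin_cases i <;> simpa
    · fin_cases i <;> fin_cases j <;> simp <;> order

lemma separable_iff (σ : Equiv.Perm (Fin n)) :
    Separable σ ↔
      (∀ a b c d, a < b → b < c → c < d → ¬ (σ c < σ a ∧ σ a < σ d ∧ σ d < σ b)) ∧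
      (∀ a b c d, a < b → b < c → c < d → ¬ (σ b < σ d ∧ σ d < σ a ∧ σ a < σ c)) := by
  rw [Separable, containsPattern_2413_iff, containsPattern_3142_iff]
  push Not
  rfl

/-- Every value of `σ` at a position before `k` lies below every value at a later position. -/
def SplitsAt (σ : Equiv.Perm (Fin n)) (k : ℕ) : Prop :=
  ∀ i j : Fin n, (i : ℕ) < k → k ≤ (j : ℕ) → σ i < σ j

/-- `σ` is a direct sum of two nonempty permutations. -/
def SumDecomposable (σ : Equiv.Perm (Fin n)) : Prop :=
  ∃ k, 0 < k ∧ k < n ∧ SplitsAt σ k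

/-- The inductive step of `exists_split`: a sequence that splits at `k` as a direct sum and avoids
3142 still splits after one more term is appended. -/
lemma exists_split_succ {f : ℕ → ℤ} (hf : Set.InjOn f (Set.Iio (n + 1)))
    (h3142 : ∀ a b c d, a < b → b < c → c < d → d < n + 1 →
      ¬ (f b < f d ∧ f d < f a ∧ f a < f c))
    (hk : 0 < k) (hkn : k < n) (hsplit : ∀ i j, i < k → k ≤ j → j < n → f i < f j) :
    ∃ l, 0 < l ∧ l < n + 1 ∧ ((∀ i j, i < l → l ≤ j → j < n + 1 → f i < f j) ∨
      ∀ i j, i < l → l ≤ j → j < n + 1 → f j < f i) := by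
  have hne : ∀ i < n, f i ≠ f n := fun i hi h =>
    hi.ne (hf (show i < n + 1 by omega) (show n < n + 1 by omega) h)
  by_cases hlow : ∀ i < k, f i < f n
  · refine ⟨k, hk, by omega, .inl fun i j hi hj hjn => ?_⟩
    obtain hjn | rfl : j < n ∨ j = n := by omega
    exacts [hsplit i j hi hj hjn, hlow i hi]
  have hex : ∃ p, p < k ∧ f n < f p := by
    push Not at hlow
    obtain ⟨p, hp, h⟩ := hlow
    exact ⟨p, hp, lt_of_le_of_ne h (hne p (by omega)).symm⟩
  obtain ⟨hpk, hp⟩ := Nat.find_spec hex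
  have hmin := fun i => @Nat.find_min _ _ hex i
  set p := Nat.find hex
  have hhigh : ∀ j, p ≤ j → j < n → f n < f j := by
    intro j hj hjn
    rcases lt_or_ge j k with hjk | hjk
    · by_contra hlt
      rcases hj.eq_or_lt with rfl | hpj
      · exact hlt hp
      · exact h3142 p j k n hpj hjk hkn (by omega)
          ⟨lt_of_le_of_ne (not_lt.1 hlt) (hne j hjn), hp, hsplit p k hpk le_rfl hkn⟩
    · exact hp.trans (hsplit p j hpk hjk hjn)
  have hbelow : ∀ i < p, f i < f n := fun i hi =>
    lt_of_le_of_ne (not_lt.1 fun h => hmin i hi ⟨by omega, h⟩) (hne i (by omega))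
  rcases Nat.eq_zero_or_pos p with hp0 | hp0
  · refine ⟨n, by omega, by omega, .inr fun i j hi hj hjn => ?_⟩
    obtain rfl : j = n := by omega
    exact hhigh i (by omega) hi
  · refine ⟨p, hp0, by omega, .inl fun i j hi hj hjn => ?_⟩
    obtain hjn | rfl : j < n ∨ j = n := by omega
    exacts [(hbelow i hi).trans (hhigh j hj hjn), hbelow i hi]

/-- A sequence of length at least two that avoids 2413 and 3142 can be cut into two nonempty parts,
one of which lies entirely below the other. -/
lemma exists_split (hn : 2 ≤ n) {f : ℕ → ℤ} (hf : Set.InjOn f (Set.Iio n))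
    (h2413 : ∀ a b c d, a < b → b < c → c < d → d < n → ¬ (f c < f a ∧ f a < f d ∧ f d < f b))
    (h3142 : ∀ a b c d, a < b → b < c → c < d → d < n → ¬ (f b < f d ∧ f d < f a ∧ f a < f c)) :
    ∃ l, 0 < l ∧ l < n ∧ ((∀ i j, i < l → l ≤ j → j < n → f i < f j) ∨
      ∀ i j, i < l → l ≤ j → j < n → f j < f i) := by
  induction n, hn using Nat.le_induction with
  | base =>
    have h01 : f 0 ≠ f 1 := fun h => zero_ne_one (hf (show 0 < 2 by omega) (show 1 < 2 by omega) h)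
    refine ⟨1, by omega, by omega, (lt_or_gt_of_ne h01).imp ?_ ?_⟩ <;>
    · intro h i j hi hj hj'
      obtain rfl : i = 0 := by omega
      obtain rfl : j = 1 := by omega
      exact h
  | succ n hn ih =>
    obtain ⟨k, hk, hkn, hup | hdown⟩ := ih (hf.mono fun i (hi : i < n) => show i < n + 1 by omega)
      (fun a b c d hab hbc hcd hd => h2413 a b c d hab hbc hcd (by omega))
      (fun a b c d hab hbc hcd hd => h3142 a b c d hab hbc hcd (by omega))
    · exact exists_split_succ hf h3142 hk hkn hup
    · obtain ⟨l, hl, hln, h⟩ := exists_split_succ (f := -f) (neg_injective.comp_injOn hf)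
        (fun a b c d hab hbc hcd hd h => h2413 a b c d hab hbc hcd hd <| by
          simp only [Pi.neg_apply] at h; omega) hk hkn
        (fun i j hi hj hjn => neg_lt_neg (hdown i j hi hj hjn))
      simp only [Pi.neg_apply, neg_lt_neg_iff] at h
      exact ⟨l, hl, hln, h.symm⟩

/-- The complement of a permutation. -/
def complement (σ : Equiv.Perm (Fin n)) : Equiv.Perm (Fin n) := σ.trans Fin.revPerm

lemma complement_lt_complement_iff {σ : Equiv.Perm (Fin n)} {i j : Fin n} :
    complement σ i < complement σ j ↔ σ j < σ i := by
  simp [complement]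

lemma complement_complement (σ : Equiv.Perm (Fin n)) : complement (complement σ) = σ := by
  ext; simp [complement]

lemma Separable.complement_perm {σ : Equiv.Perm (Fin n)} (h : Separable σ) :
    Separable (complement σ) := by
  rw [separable_iff] at h ⊢
  simp only [complement_lt_complement_iff]
  exact ⟨fun a b c d hab hbc hcd hh => h.2 a b c d hab hbc hcd (by tauto),
    fun a b c d hab hbc hcd hh => h.1 a b c d hab hbc hcd (by tauto)⟩

/-- A separable permutation of at least two elements is a direct sum or a skew sum. -/
lemma Separable.sumDecomposable_or (hn : 2 ≤ n) {σ : Equiv.Perm (Fin n)} (h : Separable σ) :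
    SumDecomposable σ ∨ SumDecomposable (complement σ) := by
  rw [separable_iff] at h
  let f : ℕ → ℤ := fun i => if hi : i < n then (σ ⟨i, hi⟩ : ℕ) else 0
  have hlt : ∀ {i j} (hi : i < n) (hj : j < n), f i < f j ↔ σ ⟨i, hi⟩ < σ ⟨j, hj⟩ := by
    intro i j hi hj
    simp [f, hi, hj]
  have hf : Set.InjOn f (Set.Iio n) := by
    intro i (hi : i < n) j (hj : j < n) hij
    simpa [f, hi, hj, Fin.val_inj] using hij
  obtain ⟨k, hk, hkn, hup | hdown⟩ := exists_split hn hf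
    (fun a b c d hab hbc hcd hd => by
      rw [hlt (by omega) (by omega), hlt (by omega) (by omega), hlt (by omega) (by omega)]
      exact h.1 ⟨a, _⟩ ⟨b, _⟩ ⟨c, _⟩ ⟨d, _⟩ hab hbc hcd)
    (fun a b c d hab hbc hcd hd => by
      rw [hlt (by omega) (by omega), hlt (by omega) (by omega), hlt (by omega) (by omega)]
      exact h.2 ⟨a, _⟩ ⟨b, _⟩ ⟨c, _⟩ ⟨d, _⟩ hab hbc hcd)
  · exact .inl ⟨k, hk, hkn, fun i j hi hj => (hlt i.2 j.2).1 (hup i j hi hj j.2)⟩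
  · exact .inr ⟨k, hk, hkn, fun i j hi hj =>
      complement_lt_complement_iff.2 <| (hlt j.2 i.2).1 (hdown i j hi hj j.2)⟩

lemma SumDecomposable.first_lt_last {σ : Equiv.Perm (Fin n)} (h : SumDecomposable σ)
    {i j : Fin n} (hi : (i : ℕ) = 0) (hj : (j : ℕ) + 1 = n) : σ i < σ j := by
  obtain ⟨k, hk, hkn, hs⟩ := h
  exact hs i j (by omega) (by omega)

lemma SumDecomposable.not_complement {σ : Equiv.Perm (Fin n)} (h : SumDecomposable σ) :
    ¬ SumDecomposable (complement σ) := by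
  intro h'
  obtain ⟨k, hk, hkn, -⟩ := id h
  exact (h.first_lt_last (i := ⟨0, by omega⟩) (j := ⟨n - 1, by omega⟩) rfl (by simp; omega)).asymm
    (complement_lt_complement_iff.1 (h'.first_lt_last rfl (by simp; omega)))

/-- Exactly half of the separable permutations of at least two elements are direct sums. -/
lemma card_SEP_eq_two_mul (hn : 2 ≤ n) :
    #(SEP n) = 2 * #{σ ∈ SEP n | SumDecomposable σ} := by
  have hcompl : #{σ ∈ SEP n | ¬ SumDecomposable σ} = #{σ ∈ SEP n | SumDecomposable σ} := by
    refine card_nbij' complement complement ?_ ?_ (fun σ _ => complement_complement σ)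
      (fun σ _ => complement_complement σ)
    · intro σ hσ
      simp only [SEP, coe_filter, mem_filter, Finset.mem_univ, true_and, Set.mem_ofPred_eq] at hσ ⊢
      exact ⟨hσ.1.complement_perm, (hσ.1.sumDecomposable_or hn).resolve_left hσ.2⟩
    · intro σ hσ
      simp only [SEP, coe_filter, mem_filter, Finset.mem_univ, true_and, Set.mem_ofPred_eq] at hσ ⊢
      exact ⟨hσ.1.complement_perm, hσ.2.not_complement⟩
  rw [← card_filter_add_card_filter_not (s := SEP n) SumDecomposable, hcompl, two_mul]

/-- The direct sum of two permutations. -/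
def directSum (σ : Equiv.Perm (Fin k)) (τ : Equiv.Perm (Fin m)) : Equiv.Perm (Fin (k + m)) :=
  finSumFinEquiv.permCongr (σ.sumCongr τ)

@[simp] lemma castAdd_lt_castAdd_iff {i j : Fin k} :
    Fin.castAdd m i < Fin.castAdd m j ↔ i < j := Iff.rfl

@[simp] lemma directSum_castAdd (σ : Equiv.Perm (Fin k)) (τ : Equiv.Perm (Fin m)) (i : Fin k) :
    directSum σ τ (Fin.castAdd m i) = Fin.castAdd m (σ i) := by
  simp [directSum, Equiv.permCongr_apply]

@[simp] lemma directSum_natAdd (σ : Equiv.Perm (Fin k)) (τ : Equiv.Perm (Fin m)) (i : Fin m) :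
    directSum σ τ (Fin.natAdd k i) = Fin.natAdd k (τ i) := by
  simp [directSum, Equiv.permCongr_apply]

lemma directSum_injective : Function.Injective fun p : Equiv.Perm (Fin k) × Equiv.Perm (Fin m) =>
    directSum p.1 p.2 := fun _ _ h =>
  Equiv.Perm.sumCongrHom_injective (finSumFinEquiv.permCongr.injective h)

lemma splitsAt_directSum (σ : Equiv.Perm (Fin k)) (τ : Equiv.Perm (Fin m)) :
    SplitsAt (directSum σ τ) k := by
  intro i j
  induction i using Fin.addCases <;> induction j using Fin.addCases <;>
    simp [-Fin.val_fin_lt, Fin.lt_def] <;> omega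

lemma splitsAt_directSum_iff (σ : Equiv.Perm (Fin k)) (τ : Equiv.Perm (Fin m)) {l : ℕ}
    (hl : l < k) : SplitsAt (directSum σ τ) l ↔ SplitsAt σ l := by
  constructor
  · intro h i j hi hj
    simpa using h (Fin.castAdd m i) (Fin.castAdd m j) hi hj
  · intro h i j
    induction i using Fin.addCases with
    | left i =>
      induction j using Fin.addCases with
      | left j => simpa using h i j
      | right j => intro _ _; simp [-Fin.val_fin_lt, Fin.lt_def]; omega
    | right i => simp; omega

lemma SplitsAt.lt_of_lt {σ : Equiv.Perm (Fin n)} (h : SplitsAt σ k) {i : Fin n}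
    (hi : (i : ℕ) < k) : (σ i : ℕ) < k := by
  by_contra! hle
  have hsub : ({j : Fin n | k ≤ (j : ℕ)} : Finset (Fin n)).map σ.toEmbedding ⊂
      ({j : Fin n | k ≤ (j : ℕ)} : Finset (Fin n)) := by
    refine (Finset.ssubset_iff_of_subset ?_).2 ⟨σ i, by simpa, by simpa⟩
    intro j hj
    obtain ⟨j, hj, rfl⟩ := Finset.mem_map.1 hj
    have := h i j hi (by simpa using hj)
    simp only [Equiv.coe_toEmbedding, mem_filter, Finset.mem_univ, true_and]
    omega
  simpa using Finset.card_lt_card hsub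

lemma SplitsAt.exists_directSum {ρ : Equiv.Perm (Fin (k + m))} (h : SplitsAt ρ k) :
    ∃ σ τ, directSum σ τ = ρ := by
  have hmem : finSumFinEquiv.symm.permCongr ρ ∈
      (Equiv.Perm.sumCongrHom (Fin k) (Fin m)).range := by
    refine Equiv.Perm.mem_sumCongrHom_range_of_perm_mapsTo_inl ?_
    rintro _ ⟨i, rfl⟩
    have hlt : (ρ (Fin.castAdd m i) : ℕ) < k := h.lt_of_lt i.2
    refine ⟨⟨ρ (Fin.castAdd m i), hlt⟩, ?_⟩
    apply finSumFinEquiv.injective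
    simp [Equiv.permCongr_apply]
  obtain ⟨⟨σ, τ⟩, hστ⟩ := hmem
  refine ⟨σ, τ, ?_⟩
  have := congrArg finSumFinEquiv.permCongr hστ
  ext i
  simpa [directSum, Equiv.permCongr_apply] using congrArg Fin.val (DFunLike.congr_fun this i)

lemma separable_directSum_iff (σ : Equiv.Perm (Fin k)) (τ : Equiv.Perm (Fin m)) :
    Separable (directSum σ τ) ↔ Separable σ ∧ Separable τ := by
  simp only [separable_iff]
  constructor
  · intro h
    refine ⟨⟨fun a b c d => ?_, fun a b c d => ?_⟩, ⟨fun a b c d => ?_, fun a b c d => ?_⟩⟩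
    · simpa using h.1 (Fin.castAdd m a) (Fin.castAdd m b) (Fin.castAdd m c) (Fin.castAdd m d)
    · simpa using h.2 (Fin.castAdd m a) (Fin.castAdd m b) (Fin.castAdd m c) (Fin.castAdd m d)
    · simpa using h.1 (Fin.natAdd k a) (Fin.natAdd k b) (Fin.natAdd k c) (Fin.natAdd k d)
    · simpa using h.2 (Fin.natAdd k a) (Fin.natAdd k b) (Fin.natAdd k c) (Fin.natAdd k d)
  · rintro ⟨hσ, hτ⟩
    have hs := splitsAt_directSum σ τ
    have hnat : ∀ x : Fin (k + m), k ≤ (x : ℕ) → ∃ y, x = Fin.natAdd k y := fun x hx =>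
      ⟨⟨x - k, by omega⟩, by ext; simp; omega⟩
    constructor <;> intro a b c d hab hbc hcd h
    · by_cases hd : (d : ℕ) < k
      · obtain ⟨a, rfl⟩ : ∃ a', a = Fin.castAdd m a' := ⟨⟨a, by omega⟩, rfl⟩
        obtain ⟨b, rfl⟩ : ∃ b', b = Fin.castAdd m b' := ⟨⟨b, by omega⟩, rfl⟩
        obtain ⟨c, rfl⟩ : ∃ c', c = Fin.castAdd m c' := ⟨⟨c, by omega⟩, rfl⟩
        obtain ⟨d, rfl⟩ : ∃ d', d = Fin.castAdd m d' := ⟨⟨d, hd⟩, rfl⟩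
        simp only [directSum_castAdd, castAdd_lt_castAdd_iff] at *
        exact hσ.1 a b c d hab hbc hcd h
      by_cases ha : (a : ℕ) < k
      · have hac := hs a c ha
        have hbd := hs b d
        omega
      · obtain ⟨a, rfl⟩ := hnat a (by omega)
        obtain ⟨b, rfl⟩ := hnat b (by omega)
        obtain ⟨c, rfl⟩ := hnat c (by omega)
        obtain ⟨d, rfl⟩ := hnat d (by omega)
        simp only [directSum_natAdd, Fin.natAdd_lt_natAdd_iff] at *
        exact hτ.1 a b c d hab hbc hcd h
    · by_cases hd : (d : ℕ) < k
      · obtain ⟨a, rfl⟩ : ∃ a', a = Fin.castAdd m a' := ⟨⟨a, by omega⟩, rfl⟩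
        obtain ⟨b, rfl⟩ : ∃ b', b = Fin.castAdd m b' := ⟨⟨b, by omega⟩, rfl⟩
        obtain ⟨c, rfl⟩ : ∃ c', c = Fin.castAdd m c' := ⟨⟨c, by omega⟩, rfl⟩
        obtain ⟨d, rfl⟩ : ∃ d', d = Fin.castAdd m d' := ⟨⟨d, hd⟩, rfl⟩
        simp only [directSum_castAdd, castAdd_lt_castAdd_iff] at *
        exact hσ.2 a b c d hab hbc hcd h
      by_cases ha : (a : ℕ) < k
      · exact absurd (hs a d ha (by omega)) h.2.1.asymm
      · obtain ⟨a, rfl⟩ := hnat a (by omega)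
        obtain ⟨b, rfl⟩ := hnat b (by omega)
        obtain ⟨c, rfl⟩ := hnat c (by omega)
        obtain ⟨d, rfl⟩ := hnat d (by omega)
        simp only [directSum_natAdd, Fin.natAdd_lt_natAdd_iff] at *
        exact hτ.2 a b c d hab hbc hcd h

/-- Separable permutations whose shortest nonempty direct summand on the left has length `k`
correspond to pairs of that summand and a remainder. -/
lemma card_firstSplit (k m : ℕ) :
    #{ρ ∈ SEP (k + m) | SplitsAt ρ k ∧ ∀ l, 0 < l → l < k → ¬ SplitsAt ρ l} =
      #{σ ∈ SEP k | ¬ SumDecomposable σ} * #(SEP m) := by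
  rw [← card_product]
  symm
  refine card_bij (fun p _ => directSum p.1 p.2) ?_ (fun p _ q _ h => directSum_injective h) ?_
  · rintro ⟨σ, τ⟩ h
    simp only [SEP, mem_product, mem_filter, Finset.mem_univ, true_and, SumDecomposable,
      not_exists, not_and, separable_directSum_iff] at h ⊢
    exact ⟨⟨h.1.1, h.2⟩, splitsAt_directSum σ τ, fun l hl hlk =>
      (splitsAt_directSum_iff σ τ hlk).not.2 (h.1.2 l hl hlk)⟩
  · intro ρ h
    simp only [SEP, mem_filter, Finset.mem_univ, true_and] at h
    obtain ⟨hsep, hs, hmin⟩ := h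
    obtain ⟨σ, τ, rfl⟩ := hs.exists_directSum
    rw [separable_directSum_iff] at hsep
    refine ⟨(σ, τ), ?_, rfl⟩
    simp only [SEP, mem_product, mem_filter, Finset.mem_univ, true_and, SumDecomposable,
      not_exists, not_and]
    exact ⟨⟨hsep.1, fun l hl hlk => (splitsAt_directSum_iff σ τ hlk).not.1 (hmin l hl hlk)⟩,
      hsep.2⟩

lemma card_sumDecomposable (n : ℕ) :
    #{ρ ∈ SEP (n + 2) | SumDecomposable ρ} =
      ∑ i ∈ range (n + 1), #{σ ∈ SEP (i + 1) | ¬ SumDecomposable σ} * #(SEP (n + 1 - i)) := by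
  have hunion : ({ρ ∈ SEP (n + 2) | SumDecomposable ρ} : Finset _) =
      (range (n + 1)).biUnion fun i => {ρ ∈ SEP (n + 2) |
        SplitsAt ρ (i + 1) ∧ ∀ l, 0 < l → l < i + 1 → ¬ SplitsAt ρ l} := by
    ext ρ
    simp only [mem_filter, mem_biUnion, mem_range]
    constructor
    · rintro ⟨hρ, h⟩
      have hspec := Nat.find_spec h
      have hmin := fun l => @Nat.find_min _ _ h l
      set p := Nat.find h
      refine ⟨p - 1, by omega, hρ, ?_⟩
      rw [show p - 1 + 1 = p by omega]
      exact ⟨hspec.2.2, fun l hl hlp hs => hmin l hlp ⟨hl, by omega, hs⟩⟩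
    · rintro ⟨i, hi, hρ, hs, -⟩
      exact ⟨hρ, i + 1, by omega, by omega, hs⟩
  rw [hunion, card_biUnion]
  · refine sum_congr rfl fun i hi => ?_
    rw [← card_firstSplit, show n + 2 = i + 1 + (n + 1 - i) by rw [mem_range] at hi; omega]
  · intro i _ j _ hij
    refine Finset.disjoint_left.2 fun ρ hρi hρj => ?_
    simp only [mem_filter] at hρi hρj
    rcases lt_or_gt_of_ne hij with h | h
    · exact hρj.2.2 (i + 1) (by omega) (by omega) hρi.2.1
    · exact hρi.2.2 (j + 1) (by omega) (by omega) hρj.2.1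

lemma card_SEP_one : #(SEP 1) = 1 := by
  rw [SEP, filter_true_of_mem]
  · simp
  · intro σ _
    rw [separable_iff]
    constructor <;> intro a b _ _ hab <;> omega

lemma card_SEP_succ_succ (n : ℕ) :
    #(SEP (n + 2)) = #(SEP (n + 1)) + ∑ i ∈ range (n + 1), #(SEP (i + 1)) * #(SEP (n + 1 - i)) := by
  have hindec_one : #{σ ∈ SEP 1 | ¬ SumDecomposable σ} = 1 := by
    rw [filter_true_of_mem, card_SEP_one]
    rintro σ - ⟨k, hk, hk1, -⟩
    omega
  have hindec : ∀ i, 2 * #{σ ∈ SEP (i + 2) | ¬ SumDecomposable σ} = #(SEP (i + 2)) := by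
    intro i
    have h₁ := card_SEP_eq_two_mul (n := i + 2) (by omega)
    have h₂ := card_filter_add_card_filter_not (s := SEP (i + 2)) SumDecomposable
    lia
  rw [card_SEP_eq_two_mul (by omega), card_sumDecomposable, sum_range_succ', sum_range_succ',
    mul_add, mul_sum]
  simp only [← mul_assoc, Nat.reduceAdd, hindec, hindec_one, card_SEP_one,
    Nat.sub_zero]
  ring

lemma card_SEP_eq_largeSchroder (n : ℕ) : #(SEP (n + 1)) = n.largeSchroder := by
  induction n using Nat.strong_induction_on with
  | _ n ih =>
    cases n with
    | zero => simp [card_SEP_one]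
    | succ n =>
      rw [card_SEP_succ_succ, Nat.largeSchroder_succ, ih n (by omega),
        ← Finset.Iio_add_one_eq_Iic, Nat.Iio_eq_range]
      congr 1
      refine sum_congr rfl fun i hi => ?_
      rw [mem_range] at hi
      rw [ih i (by omega), ← ih (n - i) (by omega), show n - i + 1 = n + 1 - i by omega]

end Combinatorics

section Analysis

lemma largeSchroder_succ_mul_pow (t : ℝ) (n : ℕ) :
    ((n + 1).largeSchroder : ℝ) * t ^ (n + 1 + 1) = t * (n.largeSchroder * t ^ (n + 1)) +
      ∑ i ∈ range (n + 1), (i.largeSchroder * t ^ (i + 1)) *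
        ((n - i).largeSchroder * t ^ (n - i + 1)) := by
  rw [Nat.largeSchroder_succ, ← Finset.Iio_add_one_eq_Iic, Nat.Iio_eq_range]
  push_cast
  rw [add_mul, sum_mul]
  congr 1
  · ring
  · refine sum_congr rfl fun i hi => ?_
    rw [mem_range] at hi
    rw [show n + 1 + 1 = (i + 1) + (n - i + 1) by omega, pow_add]
    ring

/-- The partial sums of `∑ Lₙ rⁿ⁺¹` for the large Schröder numbers `Lₙ` stay below every
nonnegative fixed point `x` of `x ↦ r + r x + x²`. -/
lemma sum_largeSchroder_le {r x : ℝ} (hr : 0 ≤ r) (hx : 0 ≤ x) (hfix : r + r * x + x ^ 2 = x)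
    (N : ℕ) : ∑ n ∈ range N, (n.largeSchroder : ℝ) * r ^ (n + 1) ≤ x := by
  have hnonneg : ∀ n : ℕ, 0 ≤ (n.largeSchroder : ℝ) * r ^ (n + 1) := fun n => by positivity
  induction N with
  | zero => simpa
  | succ N ih =>
    set g : ℕ → ℝ := fun n => (n.largeSchroder : ℝ) * r ^ (n + 1) with hg
    have hsucc : ∀ n, g (n + 1) = r * g n + ∑ i ∈ range (n + 1), g i * g (n - i) :=
      largeSchroder_succ_mul_pow r
    have hconv : ∑ n ∈ range N, ∑ i ∈ range (n + 1), g i * g (n - i) ≤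
        (∑ n ∈ range N, g n) ^ 2 := by
      rw [sum_range_diag_flip N fun i j => g i * g j, sq, sum_mul_sum]
      refine sum_le_sum fun i _ => sum_le_sum_of_subset_of_nonneg
        (range_subset_range.2 (Nat.sub_le N i)) fun j _ _ => mul_nonneg (hnonneg i) (hnonneg j)
    calc ∑ n ∈ range (N + 1), g n
        = r + r * ∑ n ∈ range N, g n + ∑ n ∈ range N, ∑ i ∈ range (n + 1), g i * g (n - i) := by
          rw [sum_range_succ', sum_congr rfl fun n _ => hsucc n, sum_add_distrib, ← mul_sum]
          simp only [hg, Nat.largeSchroder_zero]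
          ring
      _ ≤ r + r * x + x ^ 2 := by
          have h0 : 0 ≤ ∑ n ∈ range N, g n := sum_nonneg fun n _ => hnonneg n
          gcongr
          exact hconv.trans (pow_le_pow_left₀ h0 ih 2)
      _ = x := hfix

lemma discrim_pos {r : ℝ} (hr : r < 3 - 2 * √2) : 0 < r ^ 2 - 6 * r + 1 := by
  nlinarith [Real.sq_sqrt (show (0 : ℝ) ≤ 2 by norm_num), Real.sqrt_nonneg 2]

theorem hasSum_largeSchroder {t : ℝ} (ht : |t| < 3 - 2 * √2) :
    HasSum (fun n : ℕ => (n.largeSchroder : ℝ) * t ^ (n + 1))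
      ((1 - t - √(t ^ 2 - 6 * t + 1)) / 2) := by
  set g : ℕ → ℝ := fun n => (n.largeSchroder : ℝ) * t ^ (n + 1) with hg
  have hnorm : ∀ n, ‖g n‖ = (n.largeSchroder : ℝ) * |t| ^ (n + 1) := fun n => by
    simp [hg]
  have hr := abs_nonneg t
  have hr1 : |t| < 1 := by
    nlinarith [Real.one_le_sqrt.2 (show (1 : ℝ) ≤ 2 by norm_num)]
  set x := (1 - |t| - √(|t| ^ 2 - 6 * |t| + 1)) / 2 with hx
  have hsq := Real.sq_sqrt (discrim_pos ht).le
  have hx0 : 0 ≤ x := by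
    have : √(|t| ^ 2 - 6 * |t| + 1) ≤ 1 - |t| := Real.sqrt_le_iff.2 ⟨by linarith, by nlinarith⟩
    linarith
  have hfix : |t| + |t| * x + x ^ 2 = x := by
    rw [hx]
    linear_combination hsq / 4
  have hle : ∀ N, ∑ n ∈ range N, ‖g n‖ ≤ x := fun N => by
    simpa only [hnorm] using sum_largeSchroder_le hr hx0 hfix N
  have hsumm : Summable fun n => ‖g n‖ :=
    summable_of_sum_range_le (fun n => norm_nonneg _) hle
  have hsum : HasSum g (∑' n, g n) := hsumm.of_norm.hasSum
  set s := ∑' n, g n with hs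
  have hquad : s = t + t * s + s ^ 2 := by
    have hsucc : ∀ n, g (n + 1) = t * g n + ∑ i ∈ range (n + 1), g i * g (n - i) :=
      largeSchroder_succ_mul_pow t
    rw [sq, hs, tsum_mul_tsum_eq_tsum_sum_range_of_summable_norm hsumm hsumm, ← tsum_mul_left,
      add_assoc, ← Summable.tsum_add (hsumm.of_norm.mul_left t)
        (summable_norm_sum_mul_range_of_summable_norm hsumm hsumm).of_norm,
      hsumm.of_norm.tsum_eq_zero_add, tsum_congr hsucc]
    simp [hg]
  have hsx : s ≤ x :=
    (Real.le_norm_self s).trans <| (norm_tsum_le_tsum_norm hsumm).trans <|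
      hsumm.tsum_le_of_sum_range_le hle
  have hroot : √(t ^ 2 - 6 * t + 1) = 1 - t - 2 * s := by
    rw [show t ^ 2 - 6 * t + 1 = (1 - t - 2 * s) ^ 2 by linear_combination 4 * hquad]
    refine Real.sqrt_sq ?_
    linarith [le_abs_self t, Real.sqrt_nonneg (|t| ^ 2 - 6 * |t| + 1)]
  rw [hroot]
  convert hsum using 1
  ring

end Analysis

/-- The generating function of the numbers of separable permutations:
`∑_{n≥1} sₙ tⁿ = (1 - t - √(t² - 6t + 1))/2` for `|t| < 3 - 2√2`. -/
theorem sep_genfun (t : ℝ) (ht : |t| < 3 - 2 * Real.sqrt 2) :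
    HasSum (fun n : ℕ => ((SEP (n + 1)).card : ℝ) * t ^ (n + 1))
      ((1 - t - Real.sqrt (t ^ 2 - 6 * t + 1)) / 2) := by
  simpa only [card_SEP_eq_largeSchroder] using hasSum_largeSchroder ht
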